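/- Let G be a finite bipartite simple graph with parts L and R (every edge joins a vertex of L to a vertex of R) whose girth equals 8, in which every vertex of L has degree γ, and suppose that any two cycles of length 8 in G with distinct edge sets have no common vertex belonging to L. Let S ⊆ L with |S| = a ≥ 5 be such that every vertex of R has at most 2 neighbors in S, and let b be the number of vertices of R having an odd number of neighbors in S. Then (as real numbers) b ≥ aγ − a(√(24a−23)−1)/4. -/

import Mathlib

open SimpleGraph

/-!
Join two members of `S` when they share a check, and call the resulting graph `H`. Every check has
at most two neighbours in `S`, so counting the edges at `S` shows that `aγ` is at most `b` plus the
degree sum of `H`. A cycle of `H` lifts to a cycle of twice the length in the Tanner graph, so `H`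
has no triangle and at most one 4-cycle through each vertex. Therefore the walks of length two from
`v` avoid the neighbours of `v`, return to `v` exactly `deg v` times, and reach each remaining
vertex at most once, apart from one vertex that may be reached twice: there are at most `a` of them.
Summing over `v` gives `∑ deg² ≤ a²`, and then Cauchy–Schwarz gives `(∑ deg)² ≤ a³`.
-/

lemma le_one_add_choose_two (n : ℕ) : n ≤ 1 + n.choose 2 := by
  cases n with
  | zero => exact Nat.zero_le _
  | succ n => rw [Nat.choose_succ_succ', Nat.choose_one_right]; omega

lemma lt_egirth_of_lt_girth {V : Type*} {G : SimpleGraph V} {n : ℕ} (h : n < G.girth) :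
    n < G.egirth :=
  (Nat.cast_lt.2 h).trans_le G.egirth.natCast_toNat_le_self

section FourCycles

lemma isCycle_four_of_ne {V : Type*} {G : SimpleGraph V} {a b c d : V} (hab : G.Adj a b)
    (hbc : G.Adj b c) (hcd : G.Adj c d) (hda : G.Adj d a) (hac : a ≠ c) (hbd : b ≠ d) :
    (Walk.cons hab (.cons hbc (.cons hcd (.cons hda .nil)))).IsCycle := by
  simp only [Walk.cons_isCycle_iff, Walk.cons_isPath_iff, Walk.support_cons, Walk.support_nil,
    Walk.edges_cons, Walk.edges_nil, Walk.IsPath.nil, List.mem_cons, List.not_mem_nil, Sym2.eq_iff]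
  grind [hab.ne, hbc.ne, hcd.ne, hda.ne]

lemma subsingleton_commonNeighbors {V : Type*} {G : SimpleGraph V} (hG : 4 < G.egirth) {u v : V}
    (huv : u ≠ v) : (G.commonNeighbors u v).Subsingleton := by
  rintro r ⟨hur, hvr⟩ s ⟨hus, hvs⟩
  by_contra hrs
  have hc := isCycle_four_of_ne hur hvr.symm hvs hus.symm huv hrs
  exact hG.not_ge hc.egirth_le_length

variable {W : Type*} [Fintype W] [DecidableEq W] (H : SimpleGraph W) [DecidableRel H.Adj]

/-- The 4-cycles of `H` through `v`, each encoded by the vertex opposite to `v` and the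
two-element set of the remaining vertices. -/
def fourCyclesAt (v : W) : Finset (Σ _ : W, Finset W) :=
  (Finset.univ.erase v).sigma fun w ↦ (H.neighborFinset v ∩ H.neighborFinset w).powersetCard 2

variable {H} in
lemma mem_fourCyclesAt {v : W} {q : Σ _ : W, Finset W} :
    q ∈ fourCyclesAt H v ↔
      q.1 ≠ v ∧ (∀ u ∈ q.2, H.Adj v u ∧ H.Adj q.1 u) ∧ q.2.card = 2 := by
  simp [fourCyclesAt, Finset.mem_powersetCard, Finset.subset_iff]

lemma sum_degree_neighborFinset_eq_sum_card_inter (v : W) :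
    ∑ u ∈ H.neighborFinset v, H.degree u =
      ∑ w, (H.neighborFinset v ∩ H.neighborFinset w).card := by
  have h := Finset.sum_card_bipartiteAbove_eq_sum_card_bipartiteBelow
    (s := H.neighborFinset v) (t := Finset.univ) H.Adj
  convert h using 3 with u _ w
  · rw [← card_neighborFinset_eq_degree, neighborFinset_eq_filter, Finset.bipartiteAbove]
  · ext u
    simp [Finset.mem_bipartiteBelow, H.adj_comm]

omit [DecidableEq W] in
lemma sum_degree_sq :
    ∑ v, H.degree v ^ 2 = ∑ v, ∑ u ∈ H.neighborFinset v, H.degree u := by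
  rw [Finset.sum_comm' (t' := Finset.univ) (s' := fun u ↦ H.neighborFinset u)
    (by simp [H.adj_comm])]
  simp [sq]

variable {H}

omit [DecidableEq W] in
lemma disjoint_neighborFinset_of_cliqueFree_three (hH : H.CliqueFree 3) {v w : W}
    (hvw : H.Adj v w) : Disjoint (H.neighborFinset v) (H.neighborFinset w) := by
  classical
  refine Finset.disjoint_left.2 fun u hv hw ↦ hH {v, w, u} (is3Clique_triple_iff.2 ?_)
  exact ⟨hvw, (H.mem_neighborFinset v u).1 hv, (H.mem_neighborFinset w u).1 hw⟩

lemma sum_degree_neighborFinset_add_one_le (hH : H.CliqueFree 3) (v : W) :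
    ∑ u ∈ H.neighborFinset v, H.degree u + 1 ≤ Fintype.card W + (fourCyclesAt H v).card := by
  set codegree : W → ℕ := fun w ↦ (H.neighborFinset v ∩ H.neighborFinset w).card with hcodegree
  have codegree_self : codegree v = H.degree v := by simp [hcodegree]
  have pointwise (w : W) :
      codegree w + (if H.Adj v w then 1 else 0) ≤ 1 + (codegree w).choose 2 := by
    split_ifs with hvw
    · have hzero : codegree w = 0 := by
        rw [hcodegree, Finset.card_eq_zero, ← Finset.disjoint_iff_inter_eq_empty]
        exact disjoint_neighborFinset_of_cliqueFree_three hH hvw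
      simp [hzero]
    · exact le_one_add_choose_two _
  have hsum := Finset.sum_le_sum fun w (_ : w ∈ Finset.univ.erase v) ↦ pointwise w
  have sum_adj : ∑ w ∈ Finset.univ.erase v, (if H.Adj v w then 1 else 0) = H.degree v := by
    rw [Finset.sum_erase _ (by simp), ← Finset.card_filter, ← neighborFinset_eq_filter,
      card_neighborFinset_eq_degree]
  have sum_choose : ∑ w ∈ Finset.univ.erase v, (codegree w).choose 2 =
      (fourCyclesAt H v).card := by
    simp [fourCyclesAt, Finset.card_sigma, hcodegree]
  have card_erase : (Finset.univ.erase v).card + 1 = Fintype.card W :=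
    Finset.card_erase_add_one (Finset.mem_univ v)
  rw [Finset.sum_add_distrib, Finset.sum_add_distrib, sum_adj, sum_choose,
    Finset.sum_const, smul_eq_mul, mul_one] at hsum
  rw [sum_degree_neighborFinset_eq_sum_card_inter, ← Finset.add_sum_erase _ _ (Finset.mem_univ v)]
  change codegree v + ∑ w ∈ Finset.univ.erase v, codegree w + 1 ≤ _
  omega

lemma sq_sum_degree_le (hH : H.CliqueFree 3) (hquad : ∀ v, (fourCyclesAt H v).card ≤ 1) :
    (∑ v, H.degree v) ^ 2 ≤ Fintype.card W ^ 3 := by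
  have two_walks (v : W) : ∑ u ∈ H.neighborFinset v, H.degree u ≤ Fintype.card W := by
    have := sum_degree_neighborFinset_add_one_le hH v
    have := hquad v
    omega
  calc (∑ v, H.degree v) ^ 2
      ≤ Fintype.card W * ∑ v, H.degree v ^ 2 := sq_sum_le_card_mul_sum_sq
    _ = Fintype.card W * ∑ v, ∑ u ∈ H.neighborFinset v, H.degree u := by
        rw [sum_degree_sq]
    _ ≤ Fintype.card W * ∑ _v : W, Fintype.card W := by gcongr with v; exact two_walks v
    _ = Fintype.card W ^ 3 := by simp; ring

lemma injOn_fourCyclesAt_vertices (hH : H.CliqueFree 3) (v : W) :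
    Set.InjOn (fun q : Σ _ : W, Finset W ↦ insert v (insert q.1 q.2)) (fourCyclesAt H v) := by
  have not_adj {q : Σ _ : W, Finset W} (hq : q ∈ fourCyclesAt H v) : ¬ H.Adj v q.1 := by
    obtain ⟨-, hadj, hcard⟩ := mem_fourCyclesAt.1 hq
    obtain ⟨u, hu⟩ := Finset.card_pos.1 (hcard ▸ two_pos)
    exact fun hvw ↦ hH {v, q.1, u} (is3Clique_triple_iff.2 ⟨hvw, hadj u hu⟩)
  have eq_filter {q : Σ _ : W, Finset W} (hq : q ∈ fourCyclesAt H v) :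
      q.2 = (insert v (insert q.1 q.2)).filter (H.Adj v) := by
    rw [Finset.filter_insert, if_neg (H.irrefl), Finset.filter_insert, if_neg (not_adj hq),
      Finset.filter_true_of_mem fun u hu ↦ ((mem_fourCyclesAt.1 hq).2.1 u hu).1]
  rintro ⟨w, s⟩ hq ⟨w', s'⟩ hq' (hvert : insert v (insert w s) = insert v (insert w' s'))
  obtain rfl : s = s' :=
    (eq_filter hq).trans ((congrArg (Finset.filter (H.Adj v)) hvert).trans (eq_filter hq').symm)
  have hw : w ∈ insert v (insert w' s) := hvert ▸ by simp
  have hws : w ∉ s := fun h ↦ not_adj hq ((mem_fourCyclesAt.1 hq).2.1 w h).1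
  obtain rfl : w = w' := by
    simpa [(mem_fourCyclesAt.1 hq).1, hws] using hw
  rfl

lemma exists_isCycle_of_mem_fourCyclesAt {v : W} {q : Σ _ : W, Finset W}
    (hq : q ∈ fourCyclesAt H v) :
    ∃ c : H.Walk v v, c.IsCycle ∧ c.length = 4 ∧
      ∀ u, u ∈ c.support ↔ u ∈ insert v (insert q.1 q.2) := by
  obtain ⟨hne, hadj, hcard⟩ := mem_fourCyclesAt.1 hq
  obtain ⟨x, y, hxy, hs⟩ := Finset.card_eq_two.1 hcard
  obtain ⟨hvx, hwx⟩ := hadj x (by simp [hs])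
  obtain ⟨hvy, hwy⟩ := hadj y (by simp [hs])
  refine ⟨_, isCycle_four_of_ne hvx hwx.symm hwy hvy.symm hne.symm hxy, by simp, fun u ↦ ?_⟩
  simp only [Walk.support_cons, Walk.support_nil, List.mem_cons, List.not_mem_nil, hs,
    Finset.mem_insert, Finset.mem_singleton]
  tauto

end FourCycles

section VariableNodeGraph

variable {V : Type*} {G : SimpleGraph V} {S : Set V}

/-- The condition on the checks in an elementary trapping set: no vertex has more than two
neighbours in `S`. -/
def IsElementary (G : SimpleGraph V) (S : Set V) : Prop :=
  ∀ r, (S ∩ G.neighborSet r).encard ≤ 2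

/-- The checks left unsatisfied by `S`, that is, those with an odd number of neighbours in `S`. -/
def oddChecks (G : SimpleGraph V) (S : Set V) : Set V :=
  {r | Odd (S ∩ G.neighborSet r).ncard}

/-- The variable-node graph of `S`: two members of `S` are adjacent when they share a check. -/
def vnGraph (G : SimpleGraph V) (S : Set V) : SimpleGraph S where
  Adj u v := u ≠ v ∧ (G.commonNeighbors u v).Nonempty
  symm := ⟨fun u v h ↦ ⟨h.1.symm, G.commonNeighbors_symm u v ▸ h.2⟩⟩
  loopless := ⟨fun _ h ↦ h.1 rfl⟩

lemma IsElementary.inter_neighborSet_eq_pair (hS : IsElementary G S) {r u v : V} (hu : u ∈ S)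
    (hv : v ∈ S) (huv : u ≠ v) (hru : G.Adj r u) (hrv : G.Adj r v) :
    S ∩ G.neighborSet r = {u, v} := by
  refine ((Set.toFinite {u, v}).eq_of_subset_of_encard_le ?_ ?_).symm
  · exact Set.pair_subset ⟨hu, hru⟩ ⟨hv, hrv⟩
  · exact (Set.encard_pair huv).symm ▸ hS r

lemma vnGraph_adj {u v : S} :
    (vnGraph G S).Adj u v ↔ u ≠ v ∧ (G.commonNeighbors u v).Nonempty :=
  Iff.rfl

namespace vnGraph

variable {u v : S}

/-- A chosen check adjacent to both ends of an edge of the variable-node graph. -/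
noncomputable def sharedCheck (h : (vnGraph G S).Adj u v) : V :=
  (vnGraph_adj.1 h).2.some

lemma sharedCheck_mem_commonNeighbors (h : (vnGraph G S).Adj u v) :
    sharedCheck h ∈ G.commonNeighbors u v :=
  (vnGraph_adj.1 h).2.some_mem

lemma adj_sharedCheck_left (h : (vnGraph G S).Adj u v) : G.Adj u (sharedCheck h) :=
  (sharedCheck_mem_commonNeighbors h).1

lemma adj_sharedCheck_right (h : (vnGraph G S).Adj u v) : G.Adj (sharedCheck h) v :=
  (sharedCheck_mem_commonNeighbors h).2.symm

lemma sharedCheck_notMem (hind : G.IsIndepSet S) (h : (vnGraph G S).Adj u v) :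
    sharedCheck h ∉ S := fun hr ↦
  have hadj := adj_sharedCheck_left h
  hind u.2 hr hadj.ne hadj

lemma edge_eq_of_sharedCheck_eq (hS : IsElementary G S) {u' v' : S}
    (h : (vnGraph G S).Adj u v) (h' : (vnGraph G S).Adj u' v')
    (heq : sharedCheck h = sharedCheck h') : s(u, v) = s(u', v') := by
  have inter_eq {x y : S} (hxy : (vnGraph G S).Adj x y) :
      S ∩ G.neighborSet (sharedCheck hxy) = {↑x, ↑y} :=
    hS.inter_neighborSet_eq_pair x.2 y.2 (Subtype.coe_ne_coe.2 hxy.ne)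
      (adj_sharedCheck_left hxy).symm (adj_sharedCheck_right hxy)
  have hpair : ({↑u, ↑v} : Set V) = {↑u', ↑v'} := by rw [← inter_eq h, heq, inter_eq h']
  simpa only [Set.pair_eq_pair_iff, Sym2.eq_iff, Subtype.coe_inj] using hpair

/-- The walk in `G` obtained from a walk in the variable-node graph by visiting the shared check
in the middle of each step. -/
noncomputable def lift {u v : S} : (vnGraph G S).Walk u v → G.Walk u v
  | .nil => .nil
  | .cons h p => .cons (adj_sharedCheck_left h) (.cons (adj_sharedCheck_right h) (lift p))

@[simp]
lemma length_lift (p : (vnGraph G S).Walk u v) : (lift p).length = 2 * p.length := by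
  induction p with
  | nil => rfl
  | cons h p ih => simp only [lift, Walk.length_cons, ih]; ring

lemma coe_mem_support_lift (hind : G.IsIndepSet S) (p : (vnGraph G S).Walk u v) {w : S} :
    (w : V) ∈ (lift p).support ↔ w ∈ p.support := by
  induction p with
  | nil => simp [lift, Subtype.ext_iff]
  | cons h p ih =>
    have hne : (w : V) ≠ sharedCheck h := fun hw ↦ sharedCheck_notMem hind h (hw ▸ w.2)
    simp [lift, ih, hne, Subtype.ext_iff]

lemma mem_edges_of_sharedCheck_mem_support_lift (hind : G.IsIndepSet S) (hS : IsElementary G S)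
    {x y : S} (h : (vnGraph G S).Adj x y) (p : (vnGraph G S).Walk u v)
    (hp : sharedCheck h ∈ (lift p).support) : s(x, y) ∈ p.edges := by
  have ne_coe (w : S) : sharedCheck h ≠ w := fun hw ↦ sharedCheck_notMem hind h (hw ▸ w.2)
  induction p with
  | nil => simp [lift, ne_coe] at hp
  | cons h' p ih =>
    simp only [lift, Walk.support_cons, List.mem_cons, ne_coe, false_or] at hp
    rw [Walk.edges_cons, List.mem_cons]
    exact hp.imp (edge_eq_of_sharedCheck_eq hS h h') ih

lemma isPath_cons_lift (hind : G.IsIndepSet S) (hS : IsElementary G S)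
    {w : S} (h : (vnGraph G S).Adj u v) {p : (vnGraph G S).Walk v w} (hp : (lift p).IsPath)
    (he : s(u, v) ∉ p.edges) : (Walk.cons (adj_sharedCheck_right h) (lift p)).IsPath :=
  hp.cons fun hr ↦ he (mem_edges_of_sharedCheck_mem_support_lift hind hS h p hr)

lemma isPath_lift (hind : G.IsIndepSet S) (hS : IsElementary G S) {p : (vnGraph G S).Walk u v}
    (hp : p.IsPath) : (lift p).IsPath := by
  induction p with
  | nil => exact .nil
  | cons h p ih =>
    obtain ⟨hp, hu⟩ := (Walk.cons_isPath_iff h p).1 hp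
    have htail := isPath_cons_lift hind hS h (ih hp) fun he ↦
      hu (p.fst_mem_support_of_mem_edges he)
    refine htail.cons ?_
    simp [coe_mem_support_lift hind, hu, (adj_sharedCheck_left h).ne]

lemma isCycle_lift (hind : G.IsIndepSet S) (hS : IsElementary G S) {p : (vnGraph G S).Walk u u}
    (hp : p.IsCycle) : (lift p).IsCycle := by
  cases p with
  | nil => exact absurd rfl hp.ne_nil
  | cons h p =>
    obtain ⟨hp, he⟩ := (Walk.cons_isCycle_iff p h).1 hp
    have hpath := isPath_cons_lift hind hS h (isPath_lift hind hS hp) he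
    refine (Walk.cons_isCycle_iff _ _).2 ⟨hpath, fun hmem ↦ ?_⟩
    rw [Walk.edges_cons, List.mem_cons, Sym2.eq_swap, Sym2.congr_right] at hmem
    rcases hmem with huv | hmem
    · exact h.ne (Subtype.ext huv)
    · exact he (mem_edges_of_sharedCheck_mem_support_lift hind hS h p
        ((lift p).fst_mem_support_of_mem_edges hmem))

lemma egirth_le_two_mul_length (hind : G.IsIndepSet S) (hS : IsElementary G S)
    {p : (vnGraph G S).Walk u u} (hp : p.IsCycle) : G.egirth ≤ (2 * p.length : ℕ) :=
  length_lift p ▸ (isCycle_lift hind hS hp).egirth_le_length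

lemma cliqueFree_three (hind : G.IsIndepSet S) (hS : IsElementary G S) (hG : 6 < G.egirth) :
    (vnGraph G S).CliqueFree 3 := by
  intro t ht
  obtain ⟨u, p, hp, hlen⟩ := (is3Clique_iff_exists_cycle_length_three).1 ⟨t, ht⟩
  have := egirth_le_two_mul_length hind hS hp
  rw [hlen] at this
  exact hG.not_ge this

lemma card_fourCyclesAt_le_one [Fintype S] [DecidableEq S] [DecidableRel (vnGraph G S).Adj]
    (hind : G.IsIndepSet S) (hS : IsElementary G S) (hH : (vnGraph G S).CliqueFree 3)
    (hcyc : ∀ c₁ c₂ : G.Walk v v, c₁.IsCycle → c₂.IsCycle → c₁.length = 8 → c₂.length = 8 →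
      c₁.edgeSet = c₂.edgeSet) :
    (fourCyclesAt (vnGraph G S) v).card ≤ 1 := by
  refine Finset.card_le_one.2 fun q hq q' hq' ↦ injOn_fourCyclesAt_vertices hH v hq hq' ?_
  obtain ⟨c, hc, hlen, hsupp⟩ := exists_isCycle_of_mem_fourCyclesAt hq
  obtain ⟨c', hc', hlen', hsupp'⟩ := exists_isCycle_of_mem_fourCyclesAt hq'
  have hlift := isCycle_lift hind hS hc
  have hlift' := isCycle_lift hind hS hc'
  have hedges : (lift c).edgeSet = (lift c').edgeSet :=
    hcyc _ _ hlift hlift' (by simp [hlen]) (by simp [hlen'])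
  ext u
  change u ∈ insert v (insert q.1 q.2) ↔ u ∈ insert v (insert q'.1 q'.2)
  rw [← hsupp, ← hsupp', ← coe_mem_support_lift hind c, ← coe_mem_support_lift hind c',
    Walk.mem_support_iff_exists_mem_edges_of_not_nil hlift.not_nil,
    Walk.mem_support_iff_exists_mem_edges_of_not_nil hlift'.not_nil]
  simp only [← Walk.mem_edgeSet, hedges]

end vnGraph

lemma exists_vnGraph_adj_of_notMem_oddChecks {v : S} {r : V} (hvr : G.Adj v r)
    (hr : r ∉ oddChecks G S) : ∃ w : S, (vnGraph G S).Adj v w ∧ G.Adj w r := by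
  by_contra! hno
  have hsingle : S ∩ G.neighborSet r = {↑v} := by
    refine Set.eq_singleton_iff_unique_mem.2 ⟨⟨v.2, hvr.symm⟩, fun w ⟨hw, hrw⟩ ↦ ?_⟩
    by_contra hwv
    have hne : v ≠ ⟨w, hw⟩ := fun h ↦ hwv (congrArg Subtype.val h).symm
    exact hno ⟨w, hw⟩ (vnGraph_adj.2 ⟨hne, r, hvr, hrw.symm⟩) hrw.symm
  exact hr (by simp [oddChecks, hsingle])

lemma encard_neighborSet_diff_oddChecks_le (hG : 4 < G.egirth) (v : S) :
    (G.neighborSet v \ oddChecks G S).encard ≤ ((vnGraph G S).neighborSet v).encard := by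
  have hsub : G.neighborSet v \ oddChecks G S ⊆
      Set.range fun w : (vnGraph G S).neighborSet v ↦ vnGraph.sharedCheck w.2 := by
    rintro r ⟨hvr, hr⟩
    obtain ⟨w, hvw, hwr⟩ := exists_vnGraph_adj_of_notMem_oddChecks hvr hr
    exact ⟨⟨w, hvw⟩, subsingleton_commonNeighbors hG (Subtype.coe_ne_coe.2 hvw.ne)
      (vnGraph.sharedCheck_mem_commonNeighbors hvw) ⟨hvr, hwr⟩⟩
  rw [← Set.image_univ] at hsub
  calc (G.neighborSet v \ oddChecks G S).encard
      ≤ (Set.univ : Set ((vnGraph G S).neighborSet v)).encard :=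
        (Set.encard_mono hsub).trans (Set.encard_image_le _ _)
    _ = ((vnGraph G S).neighborSet v).encard := by rw [Set.encard_univ, ENat.card_coe_set_eq]

lemma pairwise_disjoint_neighborSet_inter_oddChecks (hS : IsElementary G S) :
    Pairwise (Function.onFun Disjoint fun v : S ↦ G.neighborSet v ∩ oddChecks G S) := by
  refine fun u v huv ↦ Set.disjoint_left.2 fun r ⟨hur, hr⟩ ⟨hvr, _⟩ ↦ ?_
  have hne := Subtype.coe_ne_coe.2 huv
  rw [oddChecks, Set.mem_ofPred_eq, hS.inter_neighborSet_eq_pair u.2 v.2 hne hur.symm hvr.symm,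
    Set.ncard_pair hne] at hr
  exact absurd hr (by decide)

lemma sum_encard_neighborSet_le [Fintype S] (hS : IsElementary G S) (hG : 4 < G.egirth) :
    ∑ v : S, (G.neighborSet v).encard ≤
      (oddChecks G S).encard + ∑ v, ((vnGraph G S).neighborSet v).encard := by
  have sum_odd : ∑ v : S, (G.neighborSet v ∩ oddChecks G S).encard ≤ (oddChecks G S).encard := by
    rw [← finsum_eq_sum_of_fintype,
      ← Set.encard_iUnion_of_finite (pairwise_disjoint_neighborSet_inter_oddChecks hS)]
    exact Set.encard_mono (Set.iUnion_subset fun _ ↦ Set.inter_subset_right)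
  calc ∑ v : S, (G.neighborSet v).encard
      = ∑ v : S, (G.neighborSet v ∩ oddChecks G S).encard +
          ∑ v : S, (G.neighborSet v \ oddChecks G S).encard := by
        simp only [← Finset.sum_add_distrib, add_comm (Set.encard (_ ∩ _)),
          Set.encard_sdiff_add_encard_inter]
    _ ≤ _ := add_le_add sum_odd
        (Finset.sum_le_sum fun v _ ↦ encard_neighborSet_diff_oddChecks_le hG v)

lemma finite_oddChecks [Finite S] [∀ v : S, Finite (G.neighborSet v)] :
    (oddChecks G S).Finite := by
  refine (Set.finite_iUnion fun v : S ↦ Set.toFinite (G.neighborSet v)).subset fun r hr ↦ ?_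
  obtain ⟨v, hv, hrv⟩ := Set.nonempty_of_ncard_ne_zero hr.pos.ne'
  exact Set.mem_iUnion.2 ⟨⟨v, hv⟩, hrv.symm⟩

lemma card_mul_le_ncard_oddChecks_add_sum_degree [Fintype S] [DecidableRel (vnGraph G S).Adj]
    [∀ v : S, Finite (G.neighborSet v)] (hS : IsElementary G S) (hG : 4 < G.egirth) {γ : ℕ}
    (hreg : ∀ v ∈ S, Nat.card (G.neighborSet v) = γ) :
    Fintype.card S * γ ≤ (oddChecks G S).ncard + ∑ v, (vnGraph G S).degree v := by
  have hdeg (v : S) : (G.neighborSet v).encard = γ := by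
    rw [← (Set.toFinite _).cast_ncard_eq, ← hreg v v.2, Nat.card_coe_set_eq]
  have hvnDeg (v : S) : ((vnGraph G S).neighborSet v).encard = (vnGraph G S).degree v := by
    rw [Set.encard_eq_coe_toFinset_card]; rfl
  have h := sum_encard_neighborSet_le hS hG
  simp only [hdeg, hvnDeg, ← finite_oddChecks.cast_ncard_eq, Finset.sum_const, Finset.card_univ,
    nsmul_eq_mul] at h
  exact_mod_cast h

end VariableNodeGraph

section Numeric

/-- This is `(4X + a)² ≤ a²(24a - 23)`, expanded so that no subtraction occurs. -/
lemma two_mul_sq_add_le_of_sq_le_cube {a X : ℕ} (ha : 5 ≤ a) (hX : X ^ 2 ≤ a ^ 3) :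
    2 * X ^ 2 + a * X + 3 * a ^ 2 ≤ 3 * a ^ 3 := by
  rcases ha.eq_or_lt with rfl | ha
  -- The real bound `X ≤ 5√5` is too weak here, so integrality is needed.
  · have : X ≤ 11 := by nlinarith
    nlinarith
  · obtain ⟨k, rfl⟩ := Nat.exists_eq_add_of_le' (show 3 ≤ a by omega)
    have hsq : X ^ 2 ≤ ((k + 3) * k) ^ 2 :=
      calc X ^ 2 ≤ (k + 3) ^ 2 * (k + 3) := hX
        _ ≤ (k + 3) ^ 2 * k ^ 2 := by gcongr; nlinarith
        _ = ((k + 3) * k) ^ 2 := by ring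
    have hX' : X ≤ (k + 3) * k := (Nat.pow_le_pow_iff_left two_ne_zero).1 hsq
    nlinarith [Nat.mul_le_mul_left (k + 3) hX']

lemma le_mul_sqrt_of_sq_le_cube {a X : ℕ} (ha : 5 ≤ a) (hX : X ^ 2 ≤ a ^ 3) :
    (X : ℝ) ≤ a * (√(24 * a - 23) - 1) / 4 := by
  have hquad : (2 * X ^ 2 + a * X + 3 * a ^ 2 : ℝ) ≤ 3 * a ^ 3 :=
    mod_cast two_mul_sq_add_le_of_sq_le_cube ha hX
  have hsqrt : (4 * X + a : ℝ) ≤ √(a ^ 2 * (24 * a - 23)) :=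
    Real.le_sqrt_of_sq_le (by linarith)
  rw [Real.sqrt_mul (sq_nonneg _), Real.sqrt_sq (Nat.cast_nonneg a)] at hsqrt
  linarith

end Numeric

section Bipartite

variable {V : Type*} {G : SimpleGraph V} {L R S : Set V}

lemma isIndepSet_of_isBipartiteWith (hG : G.IsBipartiteWith L R) (hSL : S ⊆ L) :
    G.IsIndepSet S := fun _ hu _ hv _ huv ↦
  hG.disjoint.notMem_of_mem_left (hSL hv) (hG.mem_of_mem_adj (hSL hu) huv)

lemma mem_right_of_nonempty_inter_neighborSet (hG : G.IsBipartiteWith L R) (hSL : S ⊆ L) {r : V}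
    (hr : (S ∩ G.neighborSet r).Nonempty) : r ∈ R :=
  have ⟨_, hv, hrv⟩ := hr
  hG.mem_of_mem_adj (hSL hv) hrv.symm

lemma isElementary_of_isBipartiteWith [Finite S] (hG : G.IsBipartiteWith L R) (hSL : S ⊆ L)
    (hcheck : ∀ r ∈ R, (S ∩ G.neighborSet r).ncard ≤ 2) : IsElementary G S := by
  intro r
  rcases (S ∩ G.neighborSet r).eq_empty_or_nonempty with hr | hr
  · simp [hr]
  · rw [← ((Set.toFinite S).inter_of_left _).cast_ncard_eq]
    exact_mod_cast hcheck r (mem_right_of_nonempty_inter_neighborSet hG hSL hr)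

lemma oddChecks_eq_of_isBipartiteWith (hG : G.IsBipartiteWith L R) (hSL : S ⊆ L) :
    oddChecks G S = {r | r ∈ R ∧ Odd (S ∩ G.neighborSet r).ncard} :=
  Set.ext fun _ ↦ (and_iff_right_of_imp fun hr ↦ mem_right_of_nonempty_inter_neighborSet hG hSL
    (Set.nonempty_of_ncard_ne_zero hr.pos.ne')).symm

end Bipartite

theorem stmt12_general {V : Type*} {G : SimpleGraph V} {S : Set V}
    [∀ v : S, Finite (G.neighborSet v)] (hind : G.IsIndepSet S) (hS : IsElementary G S)
    (hgirth : 6 < G.egirth) {γ : ℕ} (hreg : ∀ v ∈ S, Nat.card (G.neighborSet v) = γ)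
    (hcyc : ∀ v ∈ S, ∀ c₁ c₂ : G.Walk v v, c₁.IsCycle → c₂.IsCycle →
      c₁.length = 8 → c₂.length = 8 → c₁.edgeSet = c₂.edgeSet)
    {a : ℕ} (haS : Nat.card S = a) (ha : 5 ≤ a) :
    (a : ℝ) * γ - a * (√(24 * a - 23) - 1) / 4 ≤ (oddChecks G S).ncard := by
  classical
  have : Finite S := Nat.finite_of_card_ne_zero (by omega)
  have := Fintype.ofFinite S
  rw [Nat.card_eq_fintype_card] at haS
  have hfree := vnGraph.cliqueFree_three hind hS hgirth
  have hcube : (∑ v, (vnGraph G S).degree v) ^ 2 ≤ a ^ 3 := haS ▸ sq_sum_degree_le hfree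
    fun v ↦ vnGraph.card_fourCyclesAt_le_one hind hS hfree (hcyc v v.2)
  have hcount : (a * γ : ℝ) ≤ (oddChecks G S).ncard + (∑ v, (vnGraph G S).degree v : ℕ) :=
    mod_cast haS ▸ card_mul_le_ncard_oddChecks_add_sum_degree hS
      (lt_trans (by norm_num) hgirth) hreg
  linarith [le_mul_sqrt_of_sq_le_cube ha hcube]

/-- In a variable-regular Tanner graph of girth `8` in which no two 8-cycles with distinct
edge sets share a variable node, every `(a,b)`-elementary trapping set with `a ≥ 5`
satisfies `b ≥ aγ − a(√(24a−23)−1)/4`. -/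
theorem stmt12 {V : Type*} [Fintype V] (G : SimpleGraph V) (L R : Set V)
    (hdisj : Disjoint L R) (hcover : L ∪ R = Set.univ)
    (hbip : ∀ ⦃u v : V⦄, G.Adj u v → (u ∈ L ∧ v ∈ R) ∨ (u ∈ R ∧ v ∈ L))
    (hgirth : G.girth = 8)
    (γ : ℕ) (hreg : ∀ v ∈ L, Nat.card (G.neighborSet v) = γ)
    (hcyc : ∀ (u v : V) (c₁ : G.Walk u u) (c₂ : G.Walk v v),
      c₁.IsCycle → c₂.IsCycle → c₁.length = 8 → c₂.length = 8 →
      {e : Sym2 V | e ∈ c₁.edges} ≠ {e : Sym2 V | e ∈ c₂.edges} →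
      ∀ w ∈ L, w ∈ c₁.support → w ∉ c₂.support)
    (S : Set V) (hSL : S ⊆ L)
    (a : ℕ) (haS : Nat.card S = a) (ha : 5 ≤ a)
    (hcheck : ∀ r ∈ R, Nat.card {v : V | v ∈ S ∧ G.Adj r v} ≤ 2)
    (b : ℕ) (hb : b = Nat.card {r : V | r ∈ R ∧ Odd (Nat.card {v : V | v ∈ S ∧ G.Adj r v})}) :
    (a : ℝ) * γ - a * (Real.sqrt (24 * (a : ℝ) - 23) - 1) / 4 ≤ (b : ℝ) := by
  have hG : G.IsBipartiteWith L R := ⟨hdisj, hbip⟩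
  have hodd : b = (oddChecks G S).ncard := hb.trans (oddChecks_eq_of_isBipartiteWith hG hSL ▸ rfl)
  have hunique (v : V) (hv : v ∈ S) (c₁ c₂ : G.Walk v v) (h₁ : c₁.IsCycle) (h₂ : c₂.IsCycle)
      (l₁ : c₁.length = 8) (l₂ : c₂.length = 8) : c₁.edgeSet = c₂.edgeSet :=
    by_contra fun hne ↦ hcyc v v c₁ c₂ h₁ h₂ l₁ l₂ hne v (hSL hv)
      c₁.start_mem_support c₂.start_mem_support
  exact hodd ▸ stmt12_general (isIndepSet_of_isBipartiteWith hG hSL)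
    (isElementary_of_isBipartiteWith hG hSL hcheck) (lt_egirth_of_lt_girth (n := 6) (by omega))
    (fun v hv ↦ hreg v (hSL hv)) hunique haS ha
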